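/- Let w be an infinite word over a finite alphabet A, let y ∈ A be a letter, let X ⊆ A, and let u be a finite word. If w is covered by the set {u} ∪ {ux : x ∈ X ∪ {y}}, then L_y(w) is covered by the set {L_y(u)y} ∪ {L_y(u)yx : x ∈ X \ {y}}. -/

import Mathlib

/-!
Write `L` for `Lm y`. If `v` is a prefix of `w`, then `L v ++ [y]` is a prefix of `L(w)`, because
the image of every letter begins with `y` (`isPref_Lm_append`). A covering of `w` by occurrences of
the words `z n` after the prefixes `p n` is therefore transported to `L(w)` by replacing `p n` with
`L (p n)` and `z n` with a word `z'` of which `L (z n)` is a prefix: for `z n = u` and `z n = u y`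
take `z' = L u ++ [y]`, and for `z n = u x` with `x ≠ y` take `z' = L u ++ [y, x] = L (u x)`
(`exists_cover_word`). The gap conditions survive since the length of `L` is strictly increasing
along the prefixes of `w`.
-/

namespace EpiQP

/-- `u` is a prefix of the infinite word `w`. -/
def IsPref {σ : Type*} (u : List σ) (w : ℕ → σ) : Prop :=
  ∀ (i : ℕ) (h : i < u.length), u.get ⟨i, h⟩ = w i

/-- The prefix of length `n` of the infinite word `w`. -/
def prefWord {σ : Type*} (w : ℕ → σ) (n : ℕ) : List σ :=
  List.ofFn (fun i : Fin n => w i)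

/-- The finite word `u` occurs in the infinite word `w` at position `k`. -/
def OccursAt {σ : Type*} (u : List σ) (w : ℕ → σ) (k : ℕ) : Prop :=
  ∀ (i : ℕ) (h : i < u.length), u.get ⟨i, h⟩ = w (k + i)

/-- `u` is a (finite) factor of the infinite word `w`. -/
def IsFactorInf {σ : Type*} (u : List σ) (w : ℕ → σ) : Prop :=
  ∃ k, OccursAt u w k

/-- An infinite word is recurrent if each of its factors occurs infinitely often in it. -/
def Recurrent {σ : Type*} (w : ℕ → σ) : Prop :=
  ∀ (u : List σ) (k : ℕ), OccursAt u w k → ∀ N, ∃ m, N ≤ m ∧ OccursAt u w m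

/-- `u` is a quasiperiod of the infinite word `w`: `u` is non-empty and there is a
sequence of prefixes `p n ++ u` of `w` with `p 0 = ε` and
`|p n| < |p (n+1)| ≤ |p n ++ u|`. -/
def IsQuasiperiod {A : Type*} (u : List A) (w : ℕ → A) : Prop :=
  u ≠ [] ∧ ∃ p : ℕ → List A, p 0 = [] ∧
    (∀ n, (p n).length < (p (n + 1)).length ∧
      (p (n + 1)).length ≤ (p n).length + u.length) ∧
    ∀ n, IsPref (p n ++ u) w

/-- An infinite word is quasiperiodic if it has a quasiperiod. -/
def Quasiperiodic {A : Type*} (w : ℕ → A) : Prop := ∃ u, IsQuasiperiod u w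

/-- A set `X` of finite words covers the infinite word `w`. -/
def CoveredBy {A : Type*} (X : Set (List A)) (w : ℕ → A) : Prop :=
  ∃ (p z : ℕ → List A), p 0 = [] ∧ (∀ n, z n ∈ X) ∧
    (∀ n, (p n).length < (p (n + 1)).length ∧
      (p (n + 1)).length ≤ (p n).length + (z n).length) ∧
    ∀ n, IsPref (p n ++ z n) w

/-- The morphism `L_a` : `a ↦ a`, `b ↦ ab` for `b ≠ a`. -/
def Lm {A : Type*} [DecidableEq A] (a : A) (u : List A) : List A :=
  u.flatMap (fun b => if b = a then [a] else [a, b])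

/-- The morphism `R_a` : `a ↦ a`, `b ↦ ba` for `b ≠ a`. -/
def Rm {A : Type*} [DecidableEq A] (a : A) (u : List A) : List A :=
  u.flatMap (fun b => if b = a then [a] else [b, a])

/-- The pure epistandard morphism `μ_v = L_{v_1} ∘ ⋯ ∘ L_{v_k}` for `v = v_1 ⋯ v_k`. -/
def muL {A : Type*} [DecidableEq A] (v : List A) (u : List A) : List A :=
  v.foldr Lm u

/-- The pure episturmian morphism `μ_{v̄} = R_{v_1} ∘ ⋯ ∘ R_{v_k}` for `v = v_1 ⋯ v_k`. -/
def muR {A : Type*} [DecidableEq A] (v : List A) (u : List A) : List A :=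
  v.foldr Rm u

/-- Spinned letters are elements of `A × Bool`: `(a, false)` is the `L`-spinned letter `a`
and `(a, true)` is the `R`-spinned letter `ā`.  `μ` on a spinned letter. -/
def muS {A : Type*} [DecidableEq A] (x : A × Bool) : List A → List A :=
  if x.2 then Rm x.1 else Lm x.1

/-- The pure episturmian morphism `μ_{w̆}` directed by the finite spinned word `w̆`. -/
def muW {A : Type*} [DecidableEq A] (w : List (A × Bool)) (u : List A) : List A :=
  w.foldr muS u

/-- `x` is the image of the infinite word `w` under the (letterwise) morphism whose
image on the letter `a` is `f a` (all images being non-empty). -/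
def SubstOf {A : Type*} (f : A → List A) (w x : ℕ → A) : Prop :=
  ∀ n, IsPref ((prefWord w n).flatMap f) x

/-- The spinned infinite word `Δ` directs the infinite word `t`: there is a sequence
`ts` of recurrent infinite words with `ts 0 = t` and `ts n = μ_{Δ n}(ts (n+1))`. -/
def Directs {A : Type*} [DecidableEq A] (Δ : ℕ → A × Bool) (t : ℕ → A) : Prop :=
  ∃ ts : ℕ → (ℕ → A), ts 0 = t ∧ (∀ n, Recurrent (ts n)) ∧
    ∀ n, SubstOf (fun a => muS (Δ n) [a]) (ts (n + 1)) (ts n)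

/-- An infinite word is episturmian iff it is directed by some spinned infinite word. -/
def Episturmian {A : Type*} [DecidableEq A] (t : ℕ → A) : Prop :=
  ∃ Δ : ℕ → A × Bool, Directs Δ t

/-- The palindromic right-closure `w⁽⁺⁾`: the shortest palindrome having `w` as a
prefix, obtained by appending the reverse of `w` deprived of its longest
palindromic suffix. -/
def palClosure {A : Type*} [DecidableEq A] (w : List A) : List A :=
  w ++ (w.take (w.length -
    Nat.findGreatest
      (fun k => (w.drop (w.length - k)).reverse = w.drop (w.length - k)) w.length)).reverse

/-- Iterated palindromic closure: `Pal ε = ε`, `Pal (w x) = (Pal w · x)⁽⁺⁾`. -/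
def Pal {A : Type*} [DecidableEq A] (w : List A) : List A :=
  w.foldl (fun p x => palClosure (p ++ [x])) []

/-- `s` is the epistandard word directed by `Δ`, i.e. `s = lim_n Pal(Δ_1 ⋯ Δ_n)`. -/
def IsEpistandardOf {A : Type*} [DecidableEq A] (Δ : ℕ → A) (s : ℕ → A) : Prop :=
  ∀ n, IsPref (Pal (prefWord Δ n)) s

/-- The concatenation of a finite word and an infinite word. -/
def catInf {σ : Type*} (u : List σ) (y : ℕ → σ) : ℕ → σ :=
  fun n => if h : n < u.length then u.get ⟨n, h⟩ else y (n - u.length)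

/-- Prepending a letter to an infinite word. -/
def consInf {σ : Type*} (a : σ) (w : ℕ → σ) : ℕ → σ :=
  fun n => match n with
  | 0 => a
  | Nat.succ k => w k

def UltimatelyPeriodic {A : Type*} (w : ℕ → A) : Prop :=
  ∃ p N : ℕ, 0 < p ∧ ∀ n, N ≤ n → w (n + p) = w n

/-- A factor `u` of `t` is right special if `ua`, `ub` are factors of `t` for two
distinct letters `a`, `b`. -/
def RightSpecial {A : Type*} (u : List A) (t : ℕ → A) : Prop :=
  ∃ a b : A, a ≠ b ∧ IsFactorInf (u ++ [a]) t ∧ IsFactorInf (u ++ [b]) t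

/-- The combinatorial definition of episturmian words: the set of factors is closed
under reversal, and there is at most one right special factor of each length. -/
def EpisturmianC {A : Type*} (t : ℕ → A) : Prop :=
  (∀ u : List A, IsFactorInf u t → IsFactorInf u.reverse t) ∧
  ∀ u v : List A, RightSpecial u t → RightSpecial v t → u.length = v.length → u = v

/-- The shifting factor `S_{w̆}` of `μ_{w̆}` (so that `μ_{w̆}(v) = S_{w̆}⁻¹ μ_w(v) S_{w̆}`):
`S_ε = ε`, `S_{a w̆} = L_a(S_{w̆})`, `S_{ā w̆} = L_a(S_{w̆}) a`. -/
def Sfac {A : Type*} [DecidableEq A] : List (A × Bool) → List A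
  | [] => []
  | x :: v => if x.2 then Lm x.1 (Sfac v) ++ [x.1] else Lm x.1 (Sfac v)

/-- A spinned infinite word is normalized if it contains infinitely many `L`-spinned
letters but no factor of the form `ā v̄ a` (`v̄` being `R`-spinned). -/
def NormalizedInf {A : Type*} (Δ : ℕ → A × Bool) : Prop :=
  (∀ N, ∃ n, N ≤ n ∧ (Δ n).2 = false) ∧
  ∀ (a : A) (i j : ℕ), i < j → Δ i = (a, true) →
    (∀ k, i < k → k < j → (Δ k).2 = true) → Δ j ≠ (a, false)

/-- A finite spinned word is normalized if it has no factor of the form `ā v̄ a`. -/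
def NormalizedFin {A : Type*} (u : List (A × Bool)) : Prop :=
  ¬ ∃ (a : A) (w1 w2 : List (A × Bool)) (z : List A),
      u = w1 ++ (a, true) :: (z.map (fun x => (x, true)) ++ (a, false) :: w2)

/-- Strict lexicographic order on infinite words induced by the order on letters. -/
def LexLt {A : Type*} [LinearOrder A] (x y : ℕ → A) : Prop :=
  ∃ n : ℕ, (∀ i, i < n → x i = y i) ∧ x n < y n

/-- An infinite word is an infinite Lyndon word if it is strictly lexicographically
smaller than each of its proper suffixes. -/
def InfLyndon {A : Type*} [LinearOrder A] (w : ℕ → A) : Prop :=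
  ∀ i : ℕ, 0 < i → LexLt w (fun n => w (n + i))

/-- A return to `v` in `w`: the segment of `w` between two consecutive occurrences
of `v`. -/
def IsReturn {σ : Type*} (v : List σ) (w : ℕ → σ) (r : List σ) : Prop :=
  ∃ k k' : ℕ, k < k' ∧ OccursAt v w k ∧ OccursAt v w k' ∧
    (∀ j, k < j → j < k' → ¬ OccursAt v w j) ∧
    r = List.ofFn (fun i : Fin (k' - k) => w (k + i))

/-- `u` is a quasiperiod of the finite word `z`: every position of `z` falls within
some occurrence of `u` in `z`. -/
def IsQuasiperiodFin {A : Type*} (u z : List A) : Prop :=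
  u ≠ [] ∧ ∀ i, i < z.length → ∃ k, k ≤ i ∧ i < k + u.length ∧ u <+: z.drop k


theorem Lm_append {A : Type*} [DecidableEq A] (y : A) (u v : List A) :
    Lm y (u ++ v) = Lm y u ++ Lm y v := by
  simp [Lm]

theorem IsPref.of_append {A : Type*} {u v : List A} {w : ℕ → A} (h : IsPref (u ++ v) w) :
    IsPref u w := by
  intro i hi
  have := h i (by simp; omega)
  simpa [List.getElem_append_left hi] using this

theorem IsPref.eq_prefWord {A : Type*} {u : List A} {w : ℕ → A} (h : IsPref u w) :
    u = prefWord w u.length := by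
  apply List.ext_get
  · simp [prefWord]
  · intro n h1 h2
    simpa [prefWord] using h n h1

theorem prefWord_succ {A : Type*} (w : ℕ → A) (n : ℕ) :
    prefWord w (n + 1) = prefWord w n ++ [w n] := by
  rw [prefWord, List.ofFn_succ_last]
  simp [prefWord]

theorem strictMono_length_Lm_prefWord {A : Type*} [DecidableEq A] (y : A) (w : ℕ → A) :
    StrictMono fun n => (Lm y (prefWord w n)).length := by
  apply strictMono_nat_of_lt_succ
  intro n
  rw [prefWord_succ, Lm_append]
  simp only [Lm, List.flatMap_singleton, List.length_append]
  split_ifs <;> simp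

/-- Every letter image under `Lm y` starts with `y`, so the image of a prefix of `w` can always be
extended by `y` inside the image of `w`. -/
theorem isPref_Lm_append {A : Type*} [DecidableEq A] {w Lw : ℕ → A} {y : A}
    (hLw : ∀ n, IsPref (Lm y (prefWord w n)) Lw) {v : List A} (hv : IsPref v w) :
    IsPref (Lm y v ++ [y]) Lw := by
  have h := hLw (v.length + 1)
  rw [prefWord_succ, ← hv.eq_prefWord, Lm_append] at h
  by_cases hy : w v.length = y
  · simpa [Lm, hy] using h
  · have h' : IsPref ((Lm y v ++ [y]) ++ [w v.length]) Lw := by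
      simpa [Lm, hy] using h
    exact h'.of_append

/-- An occurrence of a covering word `z` after the prefix `p` of `w` yields an occurrence, after
`Lm y p`, of a word of the new covering set at least as long as `Lm y z`. -/
theorem exists_cover_word {A : Type*} [DecidableEq A] {w Lw : ℕ → A} {y : A} {X : Set A}
    {u : List A} (hLw : ∀ n, IsPref (Lm y (prefWord w n)) Lw) {p z : List A}
    (hz : z ∈ insert u ((fun x => u ++ [x]) '' (X ∪ {y}))) (hp : IsPref (p ++ z) w) :
    ∃ z' ∈ insert (Lm y u ++ [y]) ((fun x => Lm y u ++ [y] ++ [x]) '' (X \ {y})),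
      (Lm y z).length ≤ z'.length ∧ IsPref (Lm y p ++ z') Lw := by
  have himg : IsPref (Lm y (p ++ z)) Lw := (isPref_Lm_append hLw hp).of_append
  rcases hz with rfl | ⟨x, hx, rfl⟩
  · refine ⟨_, Or.inl rfl, by simp, ?_⟩
    simpa [Lm_append] using isPref_Lm_append hLw hp
  · by_cases hxy : x = y
    · subst hxy
      refine ⟨_, Or.inl rfl, by simp [Lm], ?_⟩
      simpa [Lm] using himg
    · have hxX : x ∈ X := hx.resolve_right hxy
      refine ⟨_, Or.inr ⟨x, ⟨hxX, hxy⟩, rfl⟩, by simp [Lm, hxy], ?_⟩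
      simpa [Lm, hxy] using himg

/-- if `w` is covered by `{u} ∪ {ux : x ∈ X ∪ {y}}`, then `L_y(w)` is
covered by `{L_y(u)y} ∪ {L_y(u)yx : x ∈ X \ {y}}`. -/
theorem cover_of_L_image
    {A : Type*} [Fintype A] [DecidableEq A]
    (w : ℕ → A) (y : A) (X : Set A) (u : List A)
    (Lw : ℕ → A) (hLw : SubstOf (fun b => Lm y [b]) w Lw)
    (h : CoveredBy (insert u ((fun x => u ++ [x]) '' (X ∪ {y}))) w) :
    CoveredBy (insert (Lm y u ++ [y])
      ((fun x => Lm y u ++ [y] ++ [x]) '' (X \ {y}))) Lw := by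
  have hLw' : ∀ n, IsPref (Lm y (prefWord w n)) Lw := fun n => by
    simpa [Lm] using hLw n
  obtain ⟨p, z, hp0, hz, hlen, hpre⟩ := h
  choose z' hz' hle hpre' using fun n => exists_cover_word hLw' (hz n) (hpre n)
  refine ⟨fun n => Lm y (p n), z', by simp [hp0, Lm], hz', fun n => ?_, hpre'⟩
  have hmono := strictMono_length_Lm_prefWord y w
  have e (n) : p n = prefWord w (p n).length := (hpre n).of_append.eq_prefWord
  constructor
  · have := hmono (hlen n).1
    simpa only [← e] using this
  · have h1 : (Lm y (p (n + 1))).length ≤ (Lm y (p n ++ z n)).length := by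
      rw [e (n + 1), (hpre n).eq_prefWord]
      exact hmono.monotone ((hlen n).2.trans_eq List.length_append.symm)
    rw [Lm_append, List.length_append] at h1
    exact h1.trans (Nat.add_le_add_left (hle n) _)

end EpiQP
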